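/- Let d ≥ 1 be an integer and let Δ be a finite set of odd integers each ≥ d. Let (W_{−2}, W_{−1}, …, W_d) be the unique solution of the d-system for Δ. Then for every j with −1 ≤ j ≤ d and every monomial ∏_{i∈Δ} x_i^{m_i} of total degree n = Σ_{i∈Δ} m_i, the coefficient of that monomial in W_j is zero unless n ≡ j (mod 2). -/

import Mathlib

open MvPowerSeries in
/-- Solutions of the `d`-system for `Δ` (see the paper): `W_{−2} = 1`; the constant term of
`W_j` vanishes for `−1 ≤ j ≤ d`; for `−2 ≤ j ≤ d−3`, `W_j = h_{j+2}(W_1, …, W_{d−1})`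
(sum over compositions of `j+2` into positive parts); and for `d−2 ≤ j ≤ d`,
`W_j = [u^{j+2}] Σ_{i∈Δ} x_i u^i (1 + W_0 + u^{−1}W_{−1} + u^{−2})^{i−1}`, written out as a
sum over pairs `(b,c)` of naturals with `b + 2c = i − j − 2` and `b + c ≤ i − 1`. -/
def IsDSystemSolution (d : ℕ) (Δ : Finset ℕ) (W : ℤ → MvPowerSeries ↥Δ ℚ) : Prop :=
  W (-2) = 1 ∧
  (∀ j : ℤ, -1 ≤ j → j ≤ (d : ℤ) → constantCoeff (σ := ↥Δ) (R := ℚ) (W j) = 0) ∧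
  (∀ j : ℤ, -2 ≤ j → j ≤ (d : ℤ) - 3 →
    W j = ∑ c : Composition (j + 2).toNat, ((c.blocks.map (fun k => W (k : ℤ))).prod)) ∧
  (∀ j : ℤ, (d : ℤ) - 2 ≤ j → j ≤ (d : ℤ) →
    W j = ∑ i ∈ Δ.attach,
      MvPowerSeries.X i *
        ∑ bc ∈ (Finset.range ((i : ℕ) + 1) ×ˢ Finset.range ((i : ℕ) + 1)).filter
            (fun bc => (bc.1 : ℤ) + 2 * (bc.2 : ℤ) = ((i : ℕ) : ℤ) - j - 2 ∧
              bc.1 + bc.2 ≤ (i : ℕ) - 1),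
          (C (σ := ↥Δ) (R := ℚ) ((((i : ℕ) - 1).factorial : ℚ) /
                ((((i : ℕ) - 1 - bc.1 - bc.2).factorial : ℚ) * (bc.1.factorial : ℚ) *
                  (bc.2.factorial : ℚ)))) *
            (1 + W 0) ^ ((i : ℕ) - 1 - bc.1 - bc.2) * (W (-1)) ^ bc.1)

open MvPowerSeries in
def ParT {σ : Type*} (n : ℕ) (p : ZMod 2) (F : MvPowerSeries σ ℚ) : Prop :=
  ∀ m : σ →₀ ℕ, m.degree < n → ((m.degree : ℕ) : ZMod 2) ≠ p → coeff m F = 0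

section helpers
open MvPowerSeries
variable {σ : Type*} {n : ℕ} {p q : ZMod 2} {F G : MvPowerSeries σ ℚ}

lemma ParT.mul (hF : ParT n p F) (hG : ParT n q G) : ParT n (p + q) (F * G) := by
  classical
  intro m hm hp
  rw [coeff_mul]
  refine Finset.sum_eq_zero fun x hx => ?_
  have hx' := Finset.HasAntidiagonal.mem_antidiagonal.1 hx
  have hd : x.1.degree + x.2.degree = m.degree := by rw [← hx', map_add]
  by_cases h1 : ((x.1.degree : ℕ) : ZMod 2) = p
  · have h2 : ((x.2.degree : ℕ) : ZMod 2) ≠ q := by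
      intro h2
      apply hp
      rw [← hd, Nat.cast_add, h1, h2]
    rw [hG _ (by omega) h2, mul_zero]
  · rw [hF _ (by omega) h1, zero_mul]

lemma ParT.mul_succ (hF : ParT n p F) (hG : ParT n q G) (hF0 : constantCoeff F = 0)
    (hG0 : constantCoeff G = 0) : ParT (n + 1) (p + q) (F * G) := by
  classical
  intro m hm hp
  rw [coeff_mul]
  refine Finset.sum_eq_zero fun x hx => ?_
  have hx' := Finset.HasAntidiagonal.mem_antidiagonal.1 hx
  have hd : x.1.degree + x.2.degree = m.degree := by rw [← hx', map_add]
  by_cases z1 : x.1 = 0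
  · rw [z1, coeff_zero_eq_constantCoeff_apply, hF0, zero_mul]
  by_cases z2 : x.2 = 0
  · rw [z2, coeff_zero_eq_constantCoeff_apply, hG0, mul_zero]
  have d1 : x.1.degree ≠ 0 := fun h => z1 ((Finsupp.degree_eq_zero_iff _).1 h)
  have d2 : x.2.degree ≠ 0 := fun h => z2 ((Finsupp.degree_eq_zero_iff _).1 h)
  by_cases h1 : ((x.1.degree : ℕ) : ZMod 2) = p
  · have h2 : ((x.2.degree : ℕ) : ZMod 2) ≠ q := by
      intro h2
      apply hp
      rw [← hd, Nat.cast_add, h1, h2]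
    rw [hG _ (by omega) h2, mul_zero]
  · rw [hF _ (by omega) h1, zero_mul]

lemma ParT.C (a : ℚ) : ParT n 0 (MvPowerSeries.C (σ := σ) a) := by
  classical
  intro m hm hp
  rw [coeff_C, if_neg]
  rintro rfl
  simp at hp

lemma ParT.one : ParT n 0 (1 : MvPowerSeries σ ℚ) := by
  simpa using ParT.C (σ := σ) (n := n) 1

lemma ParT.add (hF : ParT n p F) (hG : ParT n p G) : ParT n p (F + G) := by
  intro m hm hp
  rw [map_add, hF m hm hp, hG m hm hp, add_zero]

lemma ParT.sum {ι : Type*} (s : Finset ι) (f : ι → MvPowerSeries σ ℚ)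
    (h : ∀ i ∈ s, ParT n p (f i)) : ParT n p (∑ i ∈ s, f i) := by
  intro m hm hp
  rw [map_sum]
  exact Finset.sum_eq_zero fun i hi => h i hi m hm hp

lemma ParT.pow (hF : ParT n p F) (k : ℕ) : ParT n (k * p) (F ^ k) := by
  induction k with
  | zero => simpa using ParT.one
  | succ k ih =>
    rw [pow_succ]
    convert ih.mul hF using 1
    push_cast; ring

lemma ParT.X_mul (i : σ) (hF : ParT n p F) : ParT (n + 1) (p + 1) (X i * F) := by
  classical
  intro m hm hp
  rw [coeff_mul]
  refine Finset.sum_eq_zero fun x hx => ?_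
  have hx' := Finset.HasAntidiagonal.mem_antidiagonal.1 hx
  have hd : x.1.degree + x.2.degree = m.degree := by rw [← hx', map_add]
  rw [coeff_X]
  split_ifs with h
  · have h1 : x.1.degree = 1 := by rw [h]; simp
    rw [hF, mul_zero]
    · omega
    · intro h2
      apply hp
      rw [← hd, Nat.cast_add, h1, h2]
      push_cast; ring
  · rw [zero_mul]

lemma ParT.list (W : ℤ → MvPowerSeries σ ℚ) (l : List ℕ)
    (h : ∀ k ∈ l, ParT n ((k : ℕ) : ZMod 2) (W k)) :
    ParT n ((l.sum : ℕ) : ZMod 2) (l.map (fun k => W ((k : ℕ) : ℤ))).prod := by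
  induction l with
  | nil => simpa using ParT.one
  | cons a l ih =>
    simp only [List.map_cons, List.prod_cons, List.sum_cons, Nat.cast_add]
    exact (h a (by simp)).mul (ih fun k hk => h k (by simp [hk]))

lemma ParT.list_succ (W : ℤ → MvPowerSeries σ ℚ) (l : List ℕ)
    (h : ∀ k ∈ l, ParT n ((k : ℕ) : ZMod 2) (W k))
    (h0 : ∀ k ∈ l, constantCoeff (W (k : ℕ)) = 0)
    (h1 : ∀ k, l = [k] → ParT (n + 1) ((k : ℕ) : ZMod 2) (W k)) :
    ParT (n + 1) ((l.sum : ℕ) : ZMod 2) (l.map (fun k => W ((k : ℕ) : ℤ))).prod := by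
  match l with
  | [] => simpa using ParT.one
  | [a] => simpa using h1 a rfl
  | a :: b :: l =>
    rw [List.map_cons, List.prod_cons, List.sum_cons, Nat.cast_add]
    refine (h a (by simp)).mul_succ (ParT.list W (b :: l) fun k hk => h k ?_) (h0 a (by simp)) ?_
    · exact List.mem_cons_of_mem _ hk
    · rw [List.map_cons, List.prod_cons, map_mul, h0 b (by simp), zero_mul]

end helpers

/-- For `d ≥ 1` and `Δ` a finite set of **odd** integers each `≥ d`, the (unique) solution
`(W_{−2}, …, W_d)` of the `d`-system for `Δ` is periodic: for `−1 ≤ j ≤ d` and every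
monomial `∏_{i∈Δ} x_i^{m_i}` of total degree `n = Σ m_i`, the coefficient of that monomial
in `W_j` is zero unless `n ≡ j (mod 2)`. -/
theorem dSystem_odd_periodicity (d : ℕ) (hd : 1 ≤ d) (Δ : Finset ℕ)
    (hΔ : ∀ i ∈ Δ, d ≤ i ∧ Odd i)
    (W : ℤ → MvPowerSeries ↥Δ ℚ) (hW : IsDSystemSolution d Δ W) :
    ∀ j : ℤ, -1 ≤ j → j ≤ (d : ℤ) → ∀ m : ↥Δ →₀ ℕ,
      ¬ (((m.sum fun _ e => e : ℕ) : ℤ) % 2 = j % 2) →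
        MvPowerSeries.coeff (R := ℚ) m (W j) = 0 := by
  obtain ⟨-, hc, hlow, hhigh⟩ := hW
  have key : ∀ n : ℕ, ∀ j : ℤ, -1 ≤ j → j ≤ (d : ℤ) → ParT n ((j : ℤ) : ZMod 2) (W j) := by
    intro n
    induction n with
    | zero => intro j _ _ m hm; omega
    | succ n ih =>
      have aux : ∀ k : ℕ, ∀ j : ℤ, j = (d : ℤ) - k → -1 ≤ j →
          ParT (n + 1) ((j : ℤ) : ZMod 2) (W j) := by
        intro k
        induction k using Nat.strong_induction_on with
        | _ k ihk =>
          intro j hjk hj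
          by_cases hjd : (d : ℤ) - 2 ≤ j
          · rw [hhigh j hjd (by omega)]
            refine ParT.sum _ _ fun i _ => ?_
            have e : ((j : ℤ) : ZMod 2) = ((j + 1 : ℤ) : ZMod 2) + 1 := by
              have h2 : (2 : ZMod 2) = 0 := rfl
              push_cast
              linear_combination -h2
            rw [e]
            refine ParT.X_mul i (ParT.sum _ _ fun bc hbc => ?_)
            obtain ⟨-, hb, -⟩ := Finset.mem_filter.1 hbc
            obtain ⟨t, ht⟩ := (hΔ i i.2).2
            have hW0 : ParT n 0 (1 + W 0) := by
              refine ParT.one.add ?_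
              simpa using ih 0 (by omega) (by omega)
            have hW1 := ih (-1) (by omega) (by omega)
            have := ((ParT.C (n := n) (σ := ↥Δ) ((((i : ℕ) - 1).factorial : ℚ) /
                ((((i : ℕ) - 1 - bc.1 - bc.2).factorial : ℚ) * (bc.1.factorial : ℚ) *
                  (bc.2.factorial : ℚ)))).mul
                  (hW0.pow ((i : ℕ) - 1 - bc.1 - bc.2))).mul (hW1.pow bc.1)
            convert this using 1
            rw [mul_zero, zero_add, zero_add]
            have e2 : ((bc.1 : ℕ) : ZMod 2) * ((-1 : ℤ) : ZMod 2)
              = ((-(bc.1 : ℤ) : ℤ) : ZMod 2) := by push_cast; ring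
            rw [e2, ZMod.intCast_eq_intCast_iff']
            push_cast
            omega
          · rw [hlow j (by omega) (by omega)]
            refine ParT.sum _ _ fun c _ => ?_
            have hs : ((j : ℤ) : ZMod 2) = ((c.blocks.sum : ℕ) : ZMod 2) := by
              rw [c.blocks_sum, ← Int.cast_natCast, ZMod.intCast_eq_intCast_iff']
              push_cast
              omega
            have hle : ∀ b ∈ c.blocks, b ≤ (j + 2).toNat := fun b hb => by
              rw [← c.blocks_sum]; exact List.le_sum_of_mem hb
            rw [hs]
            have hl : (c.blocks >>= fun a => pure ((a : ℕ) : ℤ)) =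
                c.blocks.map (fun a : ℕ => (a : ℤ)) := by
              simp [List.map_eq_flatMap]
            rw [hl, List.map_map]
            refine ParT.list_succ W c.blocks (fun b hb => ?_) (fun b hb => ?_) (fun b hb => ?_)
            · have := hle b hb
              simpa using ih b (by omega) (by omega)
            · have := hle b hb
              exact hc b (by omega) (by omega)
            · have hb2 := c.blocks_sum
              rw [hb] at hb2
              simp only [List.sum_singleton] at hb2
              simpa using ihk (k - 2) (by omega) b (by omega) (by omega)
      intro j hj hjd
      exact aux ((d : ℤ) - j).toNat j (by omega) hj
  intro j hj hjd m hm
  refine key (m.degree + 1) j hj hjd m (by omega) fun h => hm ?_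
  rw [← Int.cast_natCast, ZMod.intCast_eq_intCast_iff'] at h
  exact h
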